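/- Let F := 1 − H⁶/48 + 3H⁷/70 − 197H⁸/4480 and N := 1 − H⁶/6 + 101H⁷/280 − 25H⁸/64. For all natural numbers d, n with d ≥ 2 and 6n ≤ 3d(d−2), one has 8!·(the coefficient of H⁸ in e(dH)·( 1 − 2d( H⁵/20 − (5d+18)H⁶/360 + (9d+8)H⁷/420 − dH⁸/60 ) )·F^{3d(d−2)−6n}·Nⁿ, computed in ℚ[H] modulo H⁹) = d⁸ − 1372d⁴ + 7992d³ − 15879d² + 10638d − 24n(35d² − 174d + 213). (This is the predegree computed in Example 4.1 of the paper for a degree-d curve with n ordinary nodes of the stated type and otherwise only ordinary flexes.) -/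

import Mathlib

open Polynomial

/-- The truncated exponential `e(dH) = ∑_{i=0}^{8} dⁱHⁱ/i!` in `ℚ[H]`. -/
noncomputable def eH (d : ℚ) : Polynomial ℚ :=
  ∑ i ∈ Finset.range 9, C (d ^ i / (Nat.factorial i : ℚ)) * X ^ i

/-- The multiplicative contribution of one ordinary flex. -/
noncomputable def Fflex : Polynomial ℚ :=
  1 - C (1 / 48 : ℚ) * X ^ 6 + C (3 / 70 : ℚ) * X ^ 7 - C (197 / 4480 : ℚ) * X ^ 8

/-- The multiplicative contribution of an ordinary node whose two branches each meet their
tangent lines with multiplicity exactly 2. -/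
noncomputable def Nnode : Polynomial ℚ :=
  1 - C (1 / 6 : ℚ) * X ^ 6 + C (101 / 280 : ℚ) * X ^ 7 - C (25 / 64 : ℚ) * X ^ 8


theorem pow_trunc (a b c : ℚ) (k : ℕ) : ∃ R : Polynomial ℚ,
    (1 + C a * X ^ 6 + C b * X ^ 7 + C c * X ^ 8 : Polynomial ℚ) ^ k
      = 1 + C (k * a) * X ^ 6 + C (k * b) * X ^ 7 + C (k * c) * X ^ 8 + X ^ 9 * R := by
  induction k with
  | zero => exact ⟨0, by simp⟩
  | succ k ih =>
    obtain ⟨R, hR⟩ := ih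
    refine ⟨R * (1 + C a * X ^ 6 + C b * X ^ 7 + C c * X ^ 8) +
      X ^ 3 * (C (k * a) + C (k * b) * X + C (k * c) * X ^ 2) *
        (C a + C b * X + C c * X ^ 2), ?_⟩
    rw [pow_succ, hR]
    simp only [Nat.cast_add, Nat.cast_one, add_mul, one_mul, C_add]
    ring

theorem eH_coeff (d : ℚ) (i : ℕ) (hi : i < 9) :
    (eH d).coeff i = d ^ i / (Nat.factorial i : ℚ) := by
  simp only [eH, finset_sum_coeff, coeff_C_mul_X_pow]
  rw [Finset.sum_ite_eq]
  simp [hi]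

theorem coeff_main (E : Polynomial ℚ) (a5 a6 a7 a8 b6 b7 b8 c6 c7 c8 : ℚ) (R S : Polynomial ℚ) :
    (E * (1 + C a5 * X ^ 5 + C a6 * X ^ 6 + C a7 * X ^ 7 + C a8 * X ^ 8) *
      (1 + C b6 * X ^ 6 + C b7 * X ^ 7 + C b8 * X ^ 8 + X ^ 9 * R) *
      (1 + C c6 * X ^ 6 + C c7 * X ^ 7 + C c8 * X ^ 8 + X ^ 9 * S)).coeff 8
    = E.coeff 8 + a5 * E.coeff 3 + (a6 + b6 + c6) * E.coeff 2 + (a7 + b7 + c7) * E.coeff 1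
      + (a8 + b8 + c8) * E.coeff 0 := by
  have key : ∀ A B D : Polynomial ℚ,
      E * (1 + X ^ 5 * A) * (1 + X ^ 6 * B + X ^ 9 * R) * (1 + X ^ 6 * D + X ^ 9 * S)
      = E + E * A * X ^ 5 + E * (B + D) * X ^ 6
        + E * (R * (1 + X ^ 5 * A) * (1 + X ^ 6 * D + X ^ 9 * S)
          + S * (1 + X ^ 5 * A) * (1 + X ^ 6 * B)
          + X ^ 2 * A * (B + D) + X ^ 3 * B * D * (1 + X ^ 5 * A)) * X ^ 9 := by
    intro A B D; ring
  have h := key (C a5 + C a6 * X + C a7 * X ^ 2 + C a8 * X ^ 3)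
    (C b6 + C b7 * X + C b8 * X ^ 2) (C c6 + C c7 * X + C c8 * X ^ 2)
  have e : (E * (1 + C a5 * X ^ 5 + C a6 * X ^ 6 + C a7 * X ^ 7 + C a8 * X ^ 8) *
      (1 + C b6 * X ^ 6 + C b7 * X ^ 7 + C b8 * X ^ 8 + X ^ 9 * R) *
      (1 + C c6 * X ^ 6 + C c7 * X ^ 7 + C c8 * X ^ 8 + X ^ 9 * S)) = 
      E * (1 + X ^ 5 * (C a5 + C a6 * X + C a7 * X ^ 2 + C a8 * X ^ 3)) *
      (1 + X ^ 6 * (C b6 + C b7 * X + C b8 * X ^ 2) + X ^ 9 * R) *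
      (1 + X ^ 6 * (C c6 + C c7 * X + C c8 * X ^ 2) + X ^ 9 * S) := by
    congr 1
    · congr 1
      · ring
      · ring
    · ring
  rw [e, h]
  have h2 : E * (C a5 + C a6 * X + C a7 * X ^ 2 + C a8 * X ^ 3) * X ^ 5 =
      C a5 * (E * X ^ 5) + C a6 * (E * X ^ 6) + C a7 * (E * X ^ 7) + C a8 * (E * X ^ 8) := by ring
  have h3 : E * (C b6 + C b7 * X + C b8 * X ^ 2 + (C c6 + C c7 * X + C c8 * X ^ 2)) * X ^ 6 =
      C (b6 + c6) * (E * X ^ 6) + C (b7 + c7) * (E * X ^ 7) + C (b8 + c8) * (E * X ^ 8) := by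
    simp only [C_add]; ring
  rw [h2, h3]
  simp only [coeff_add, coeff_C_mul, coeff_mul_X_pow']
  norm_num
  ring

/-- Example 4.1: the predegree of a degree-`d` curve with `n` ordinary nodes of the stated
type and otherwise only ordinary flexes. -/
theorem stmt_10 (d n : ℕ) (hd : 2 ≤ d) (hn : 6 * n ≤ 3 * d * (d - 2)) :
    (Nat.factorial 8 : ℚ) *
      ((eH (d : ℚ) * (1 - C (2 * (d : ℚ)) *
          (C (1 / 20 : ℚ) * X ^ 5 - C ((5 * (d : ℚ) + 18) / 360) * X ^ 6
            + C ((9 * (d : ℚ) + 8) / 420) * X ^ 7 - C ((d : ℚ) / 60) * X ^ 8)) *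
        Fflex ^ (3 * d * (d - 2) - 6 * n) * Nnode ^ n).coeff 8)
    = (d : ℚ) ^ 8 - 1372 * (d : ℚ) ^ 4 + 7992 * (d : ℚ) ^ 3 - 15879 * (d : ℚ) ^ 2
        + 10638 * (d : ℚ) - 24 * (n : ℚ) * (35 * (d : ℚ) ^ 2 - 174 * (d : ℚ) + 213) := by
  have hF : Fflex = 1 + C (-1 / 48 : ℚ) * X ^ 6 + C (3 / 70 : ℚ) * X ^ 7
      + C (-197 / 4480 : ℚ) * X ^ 8 := by
    simp only [Fflex, neg_div, C_neg]; ring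
  have hN : Nnode = 1 + C (-1 / 6 : ℚ) * X ^ 6 + C (101 / 280 : ℚ) * X ^ 7
      + C (-25 / 64 : ℚ) * X ^ 8 := by
    simp only [Nnode, neg_div, C_neg]; ring
  have hA : (1 - C (2 * (d : ℚ)) *
          (C (1 / 20 : ℚ) * X ^ 5 - C ((5 * (d : ℚ) + 18) / 360) * X ^ 6
            + C ((9 * (d : ℚ) + 8) / 420) * X ^ 7 - C ((d : ℚ) / 60) * X ^ 8)) =
      1 + C (-(2 * (d : ℚ) * (1 / 20))) * X ^ 5
        + C (2 * (d : ℚ) * ((5 * (d : ℚ) + 18) / 360)) * X ^ 6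
        + C (-(2 * (d : ℚ) * ((9 * (d : ℚ) + 8) / 420))) * X ^ 7
        + C (2 * (d : ℚ) * ((d : ℚ) / 60)) * X ^ 8 := by
    rw [C_neg, C_neg, C_mul (a := 2 * (d : ℚ)), C_mul (a := 2 * (d : ℚ)),
      C_mul (a := 2 * (d : ℚ)), C_mul (a := 2 * (d : ℚ))]
    ring
  have hm : ((3 * d * (d - 2) - 6 * n : ℕ) : ℚ) = 3 * d * (d - 2) - 6 * n := by
    rw [Nat.cast_sub hn]; push_cast [Nat.cast_sub hd]; ring
  obtain ⟨R, hR⟩ := pow_trunc (-1 / 48) (3 / 70) (-197 / 4480) (3 * d * (d - 2) - 6 * n)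
  obtain ⟨S, hS⟩ := pow_trunc (-1 / 6) (101 / 280) (-25 / 64) n
  rw [hA, hF, hN, hR, hS, coeff_main, hm, eH_coeff _ _ (by norm_num), eH_coeff _ _ (by norm_num),
    eH_coeff _ _ (by norm_num), eH_coeff _ _ (by norm_num), eH_coeff _ _ (by norm_num)]
  simp only [Nat.factorial]
  push_cast
  field_simp
  ring
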